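/- arXiv:2511.01509 — 2 statements merged into one kernel-verified Lean document; each statement's English description precedes it below -/
import Mathlib

section
/- Let k ≥ 5. For any two distinct vertices x, y ∈ B ∪ {a_2} of H_k(P_3), there is a path on 2k−1 vertices in H_k(P_3) starting at x and ending at y. Moreover, in the graph H_k(P_3) + a_1a_3 obtained by adding the edge a_1a_3, for every b ∈ B there is a path on 2k vertices starting at b and ending at a_2. -/
open SimpleGraph

/-- The number of edges of a simple graph. -/
noncomputable def edgeCount {V : Type*} (G : SimpleGraph V) : ℕ := G.edgeSet.ncard

/-- `H` occurs as a subgraph of `G` (there is an injective map preserving adjacency). -/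
def ContainsCopy {V W : Type*} (G : SimpleGraph V) (H : SimpleGraph W) : Prop :=
  ∃ f : W → V, Function.Injective f ∧ ∀ a b : W, H.Adj a b → G.Adj (f a) (f b)

/-- The Turán number `ex(n, H)`: the maximum number of edges of an `H`-free
simple graph on `n` vertices. -/
noncomputable def exNum (n : ℕ) {W : Type*} (H : SimpleGraph W) : ℕ :=
  sSup {m | ∃ G : SimpleGraph (Fin n), ¬ ContainsCopy G H ∧ edgeCount G = m}

/-- `h(n,k,a) = C(k-a,2) + a(n-k+a)`. -/
def hFun (n k a : ℕ) : ℕ := (k - a).choose 2 + a * (n - k + a)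

/-- `c(n,m,ℓ) = C(m-1,2) + t·C(ℓ-1,2) + C(r,2)` where `n = (m-1) + t(ℓ-1) + r`,
`0 ≤ r < ℓ-1`. -/
def cFun (n m l : ℕ) : ℕ :=
  (m - 1).choose 2 + ((n - (m - 1)) / (l - 1)) * ((l - 1).choose 2)
    + ((n - (m - 1)) % (l - 1)).choose 2

/-- A graph is 2-connected if it has at least 3 vertices and removing any
single vertex leaves a connected graph. -/
def TwoConnected {V : Type*} [Fintype V] (G : SimpleGraph V) : Prop :=
  3 ≤ Fintype.card V ∧ ∀ v : V, (G.induce ({v}ᶜ : Set V)).Connected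

/-- The circumference of a graph: the length of a longest cycle
(`0` if there is no cycle). -/
noncomputable def circumference {V : Type*} (G : SimpleGraph V) : ℕ :=
  sSup {m | ∃ (v : V) (c : G.Walk v v), c.IsCycle ∧ c.length = m}

/-- The number of neighbours (in `G`) of `x` lying on the walk `p`. -/
noncomputable def degOn {V : Type*} (G : SimpleGraph V) {a b : V} (p : G.Walk a b) (x : V) : ℕ :=
  {v | v ∈ p.support ∧ G.Adj x v}.ncard

/-- The graph obtained from `G` by adding the edge `uv`. -/
def addEdge {V : Type*} (G : SimpleGraph V) (u v : V) : SimpleGraph V :=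
  G ⊔ SimpleGraph.fromEdgeSet {s(u, v)}

/-- The minimum degree of a graph (with classical decidability). -/
noncomputable def minDeg {V : Type*} [Fintype V] (G : SimpleGraph V) : ℕ :=
  @SimpleGraph.minDegree _ G _ (Classical.decRel _)
open SimpleGraph

/-- Membership (as 0-indexed natural) in the set `C` of `H_k(s)`:
`C = {x_{s+1}, x_{s+3}, …, x_{2k-s+1}}` (1-indexed). -/
def inC_HkS (k s i : ℕ) : Prop := s ≤ i ∧ i ≤ 2 * k - s ∧ (i - s) % 2 = 0

/-- Membership in the set `D` of `H_k(s)`: `D = {x_{s+2}, …, x_{2k-s}}` (1-indexed). -/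
def inD_HkS (k s i : ℕ) : Prop := s ≤ i ∧ i ≤ 2 * k - s ∧ (i - s) % 2 = 1

/-- The graph `H_k(s)`: the path `x_1 … x_{2k+1}` (here 0-indexed on `Fin (2k+1)`),
plus all edges inside `A = {x_1,…,x_s}`, all edges inside `B = {x_{2k-s+2},…,x_{2k+1}}`,
and all edges between `A ∪ B` and `C = {x_{s+1}, x_{s+3}, …, x_{2k-s+1}}`. -/
def HkS (k s : ℕ) : SimpleGraph (Fin (2 * k + 1)) :=
  SimpleGraph.fromRel (fun x y =>
    ((y : ℕ) = (x : ℕ) + 1) ∨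
    ((x : ℕ) < s ∧ (y : ℕ) < s) ∨
    (2 * k - s + 1 ≤ (x : ℕ) ∧ 2 * k - s + 1 ≤ (y : ℕ)) ∨
    (((x : ℕ) < s ∨ 2 * k - s + 1 ≤ (x : ℕ)) ∧ inC_HkS k s (y : ℕ)))

/-- Membership in the part `C` (of size `k-1`) of `H_k(M_2)` (0-indexed):
`C = {x_3, x_5, …, x_{2k-1}}` (1-indexed). -/
def inC_HkM2 (k i : ℕ) : Prop := 2 ≤ i ∧ i ≤ 2 * k - 2 ∧ i % 2 = 0

/-- Membership in `D` of `H_k(M_2)` (0-indexed): `D = {x_4, x_6, …, x_{2k-2}}` (1-indexed). -/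
def inD_HkM2 (k i : ℕ) : Prop := 3 ≤ i ∧ i ≤ 2 * k - 3 ∧ i % 2 = 1

/-- The graph `H_k(M_2)`: the complete bipartite graph with parts
`C = {x_3,x_5,…,x_{2k-1}}` (size `k-1`) and `A ∪ B ∪ D` (size `k+2`), where
`A = {x_1,x_2}`, `B = {x_{2k},x_{2k+1}}`, `D = {x_4,…,x_{2k-2}}`, together with the
matching edges `x_1x_2` and `x_{2k}x_{2k+1}` (here 0-indexed on `Fin (2k+1)`). -/
def HkM2 (k : ℕ) : SimpleGraph (Fin (2 * k + 1)) :=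
  SimpleGraph.fromRel (fun x y =>
    ((x : ℕ) = 0 ∧ (y : ℕ) = 1) ∨
    ((x : ℕ) = 2 * k - 1 ∧ (y : ℕ) = 2 * k) ∨
    (inC_HkM2 k (x : ℕ) ∧ ¬ inC_HkM2 k (y : ℕ)))

/-- Membership in the part `B = {b_1, …, b_{k-1}}` of `H_k(P_3)`; on `Fin (2k+1)` we take
`a_1 = 0, a_2 = 1, a_3 = 2`, `B = {3, …, k+1}`, `C = {k+2, …, 2k}`. -/
def inB_HkP3 (k i : ℕ) : Prop := 3 ≤ i ∧ i ≤ k + 1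

/-- Membership in the set `C = {c_1, …, c_{k-1}}` of `H_k(P_3)`. -/
def inC_HkP3 (k i : ℕ) : Prop := k + 2 ≤ i ∧ i ≤ 2 * k

/-- The graph `H_k(P_3)`: the complete bipartite graph `K_{k-1,k+2}` with parts
`B = {b_1,…,b_{k-1}}` and `A ∪ C` where `A = {a_1,a_2,a_3}`, `C = {c_1,…,c_{k-1}}`,
plus the edges `a_1a_2` and `a_2a_3`. Here `a_1 = 0, a_2 = 1, a_3 = 2`,
`B = {3,…,k+1}`, `C = {k+2,…,2k}` on `Fin (2k+1)`. -/
def HkP3 (k : ℕ) : SimpleGraph (Fin (2 * k + 1)) :=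
  SimpleGraph.fromRel (fun x y =>
    ((x : ℕ) = 0 ∧ (y : ℕ) = 1) ∨
    ((x : ℕ) = 1 ∧ (y : ℕ) = 2) ∨
    (inB_HkP3 k (x : ℕ) ∧ ¬ inB_HkP3 k (y : ℕ)))

/-- The graph `F_k(t)`: the path `x_1 … x_{2k+t}` (0-indexed on `Fin (2k+t)`), plus all
edges inside `A = {x_1,…,x_k}`, all edges inside `B = {x_{k+t+1},…,x_{2k+t}}`, all edges
between `x_k` and `B`, and all edges between `x_{k+t+1}` and `A`. -/
def FkT (k t : ℕ) : SimpleGraph (Fin (2 * k + t)) :=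
  SimpleGraph.fromRel (fun x y =>
    ((y : ℕ) = (x : ℕ) + 1) ∨
    ((x : ℕ) < k ∧ (y : ℕ) < k) ∨
    (k + t ≤ (x : ℕ) ∧ k + t ≤ (y : ℕ)) ∨
    ((x : ℕ) = k - 1 ∧ k + t ≤ (y : ℕ)) ∨
    ((x : ℕ) = k + t ∧ (y : ℕ) < k))

/-- The graph `H(n,k,a)`: vertices `{0,…,k-2a-1} = A`, `{k-2a,…,k-a-1} = B`,
`{k-a,…,n-1} = C`; all edges inside `A ∪ B` and all edges between `B` and `C`. -/
def Hgraph (n k a : ℕ) : SimpleGraph (Fin n) :=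
  SimpleGraph.fromRel (fun x y =>
    ((x : ℕ) < k - a ∧ (y : ℕ) < k - a) ∨
    (k - 2 * a ≤ (x : ℕ) ∧ (x : ℕ) < k - a ∧ k - a ≤ (y : ℕ)))

/-- The graph `Z(n,k,t)` (for `n = (k-t-2) + ℓ(t-1) + 2`): two universal mutually adjacent
vertices `0, 1`, a clique `K_{k-t-2}` on `{2,…,k-t-1}`, and consecutive blocks of size
`t-1` on the remaining vertices, each forming a clique `K_{t-1}`. -/
def Zgraph (n k t : ℕ) : SimpleGraph (Fin n) :=
  SimpleGraph.fromRel (fun x y =>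
    ((x : ℕ) < 2) ∨ ((y : ℕ) < 2) ∨
    (2 ≤ (x : ℕ) ∧ (x : ℕ) < k - t ∧ 2 ≤ (y : ℕ) ∧ (y : ℕ) < k - t) ∨
    (k - t ≤ (x : ℕ) ∧ k - t ≤ (y : ℕ) ∧
      ((x : ℕ) - (k - t)) / (t - 1) = ((y : ℕ) - (k - t)) / (t - 1)))

/-- A path `q` from `u` can be extended backwards to a path from any `x ∈ S` that zigzags through
all of `S`, provided `S ∪ {u}` is completely joined to a large enough set `T` and `S`, `T` and
`q` are pairwise disjoint. -/
theorem exists_isPath_zigzag {V : Type*} [DecidableEq V] {G : SimpleGraph V} {u y : V}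
    (q : G.Walk u y) (hq : q.IsPath) (n : ℕ) :
    ∀ (S T : Finset V) (x : V), x ∈ S → S.card = n → S.card ≤ T.card → Disjoint S T →
      (∀ v ∈ q.support, v ∉ S ∧ v ∉ T) → (∀ t ∈ T, G.Adj t u ∧ ∀ s ∈ S, G.Adj s t) →
      ∃ p : G.Walk x y, p.IsPath ∧ p.support.length = q.support.length + 2 * n ∧
        ∀ v ∈ p.support, v ∈ S ∨ v ∈ T ∨ v ∈ q.support := by
  induction n with
  | zero =>
    intro S T x hx hS
    simp_all
  | succ n ih =>
    intro S T x hx hS hST hdisj hsupp hadj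
    obtain ⟨t, ht⟩ : T.Nonempty := Finset.card_pos.mp (by omega)
    have hxT : x ∉ T := Finset.disjoint_left.mp hdisj hx
    have htS : t ∉ S := Finset.disjoint_right.mp hdisj ht
    have hxt : G.Adj x t := (hadj t ht).2 x hx
    have hSx : (S.erase x).card = n := by rw [Finset.card_erase_of_mem hx, hS]; rfl
    have hTt : (T.erase t).card = T.card - 1 := Finset.card_erase_of_mem ht
    obtain ⟨z, r, hz, hr, hlen, hrS⟩ : ∃ (z : V) (r : G.Walk z y), G.Adj t z ∧ r.IsPath ∧
        r.support.length = q.support.length + 2 * n ∧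
        ∀ v ∈ r.support, v ∈ S.erase x ∨ v ∈ T.erase t ∨ v ∈ q.support := by
      rcases (S.erase x).eq_empty_or_nonempty with h0 | ⟨z, hz⟩
      · rw [h0, Finset.card_empty] at hSx
        exact ⟨u, q, (hadj t ht).1, hq, by omega, fun v hv => Or.inr (Or.inr hv)⟩
      · obtain ⟨r, hr⟩ := ih (S.erase x) (T.erase t) z hz hSx (by omega)
          (Finset.disjoint_of_subset_left (Finset.erase_subset _ _)
            (Finset.disjoint_of_subset_right (Finset.erase_subset _ _) hdisj))
          (fun v hv => ⟨fun h => (hsupp v hv).1 (Finset.mem_of_mem_erase h),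
            fun h => (hsupp v hv).2 (Finset.mem_of_mem_erase h)⟩)
          (fun s hs => ⟨(hadj s (Finset.mem_of_mem_erase hs)).1, fun w hw =>
            (hadj s (Finset.mem_of_mem_erase hs)).2 w (Finset.mem_of_mem_erase hw)⟩)
        exact ⟨z, r, ((hadj t ht).2 z (Finset.mem_of_mem_erase hz)).symm, hr⟩
    have htr : t ∉ r.support := fun h => by
      have := hrS t h
      have := hsupp t
      simp_all
    have hxr : x ∉ r.support := fun h => by
      have := hrS x h
      have := hsupp x
      simp_all
    refine ⟨.cons hxt (.cons hz r), ?_, ?_, ?_⟩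
    · simp [Walk.cons_isPath_iff, hr, htr, hxr, hxt.ne]
    · simp only [Walk.support_cons, List.length_cons, hlen]
      ring
    · intro v hv
      simp only [Walk.support_cons, List.mem_cons] at hv
      rcases hv with rfl | rfl | hv
      · exact Or.inl hx
      · exact Or.inr (Or.inl ht)
      · have := hrS v hv
        simp only [Finset.mem_erase] at this
        tauto

/-- In a supergraph of `H_k(P_3)`, a path from a vertex of `B` that avoids `C` and some `x ∈ B`
extends backwards to a path from `x` that zigzags through the remaining vertices of `B`, where `R`
is the set of vertices of `B` on the given path. -/
theorem exists_isPath_of_HkP3_le {k : ℕ} {G : SimpleGraph (Fin (2 * k + 1))} (hG : HkP3 k ≤ G)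
    {x u y : Fin (2 * k + 1)} (hx : inB_HkP3 k x) (hu : inB_HkP3 k u) (q : G.Walk u y)
    (hq : q.IsPath) (R : Finset (Fin (2 * k + 1))) (hR : ∀ v ∈ R, inB_HkP3 k v) (hxR : x ∉ R)
    (hqR : ∀ v ∈ q.support, v ∈ R ∨ (v : ℕ) < 3) :
    ∃ p : G.Walk x y, p.IsPath ∧ p.support.length = q.support.length + 2 * (k - 1 - R.card) := by
  have hk : 3 ≤ k + 1 := hx.1.trans hx.2
  let B : Finset (Fin (2 * k + 1)) := Finset.Icc ⟨3, by omega⟩ ⟨k + 1, by omega⟩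
  let C : Finset (Fin (2 * k + 1)) := Finset.Icc ⟨k + 2, by omega⟩ ⟨2 * k, by omega⟩
  have hB (v : Fin (2 * k + 1)) : v ∈ B ↔ inB_HkP3 k v := by
    simp [B, inB_HkP3, Fin.le_def]
  have hC (v : Fin (2 * k + 1)) : v ∈ C ↔ k + 2 ≤ (v : ℕ) := by
    simp only [C, Finset.mem_Icc, Fin.le_def]
    omega
  have hBcard : B.card = k - 1 := by simp [B, Fin.card_Icc]
  have hCcard : C.card = k - 1 := by simp only [C, Fin.card_Icc]; omega
  have hScard : (B \ R).card = k - 1 - R.card := by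
    rw [Finset.card_sdiff_of_subset fun v hv => (hB v).2 (hR v hv), hBcard]
  have hadj {s t : Fin (2 * k + 1)} (hs : inB_HkP3 k s) (ht : t ∈ C) : G.Adj s t := by
    rw [hC] at ht
    refine hG ?_
    simp only [HkP3, fromRel_adj, inB_HkP3, ne_eq, Fin.ext_iff] at hs ⊢
    omega
  obtain ⟨p, hp, hlen, -⟩ := exists_isPath_zigzag q hq _ (B \ R) C x
    (Finset.mem_sdiff.2 ⟨(hB x).2 hx, hxR⟩) hScard (by omega)
    (Finset.disjoint_left.2 fun v hv hv' => by
      rw [Finset.mem_sdiff, hB, inB_HkP3] at hv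
      rw [hC] at hv'
      omega)
    (fun v hv => by
      rw [Finset.mem_sdiff, hB, hC]
      rcases hqR v hv with h | h
      · have := hR v h
        simp only [inB_HkP3] at this
        exact ⟨fun h' => h'.2 h, by omega⟩
      · exact ⟨fun h' => by have := h'.1.1; omega, by omega⟩)
    (fun t ht => ⟨(hadj hu ht).symm, fun s hs =>
      hadj ((hB s).1 (Finset.mem_sdiff.1 hs).1) ht⟩)
  exact ⟨p, hp, hlen⟩

/-- `H_k(P_3)` has a path on `2k-1` vertices between any two distinct vertices of `B`. -/
theorem HkP3_exists_isPath_of_inB {k : ℕ} (hk : 4 ≤ k) {x y : Fin (2 * k + 1)} (hxy : x ≠ y)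
    (hx : inB_HkP3 k x) (hy : inB_HkP3 k y) :
    ∃ p : (HkP3 k).Walk x y, p.IsPath ∧ p.support.length = 2 * k - 1 := by
  obtain ⟨u, hu, hux, huy⟩ : ∃ u : Fin (2 * k + 1), inB_HkP3 k u ∧ u ≠ x ∧ u ≠ y := by
    have h : ∃ i : ℕ, 3 ≤ i ∧ i ≤ 5 ∧ i ≠ x ∧ i ≠ y := by
      by_contra! h
      have := h 3
      have := h 4
      have := h 5
      omega
    obtain ⟨i, h3, h5, hix, hiy⟩ := h
    exact ⟨⟨i, by omega⟩, ⟨h3, by simp only; omega⟩, by simpa [Fin.ext_iff], by simpa [Fin.ext_iff]⟩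
  simp only [inB_HkP3, ne_eq, Fin.ext_iff] at hx hy hu hxy hux huy
  obtain ⟨a₁, ha₁⟩ : ∃ a : Fin (2 * k + 1), (a : ℕ) = 0 := ⟨⟨0, by omega⟩, rfl⟩
  obtain ⟨a₂, ha₂⟩ : ∃ a : Fin (2 * k + 1), (a : ℕ) = 1 := ⟨⟨1, by omega⟩, rfl⟩
  obtain ⟨a₃, ha₃⟩ : ∃ a : Fin (2 * k + 1), (a : ℕ) = 2 := ⟨⟨2, by omega⟩, rfl⟩
  have h₁ : (HkP3 k).Adj u a₁ := by
    simp only [HkP3, fromRel_adj, inB_HkP3, ne_eq, Fin.ext_iff]; omega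
  have h₂ : (HkP3 k).Adj a₁ a₂ := by
    simp only [HkP3, fromRel_adj, inB_HkP3, ne_eq, Fin.ext_iff]; omega
  have h₃ : (HkP3 k).Adj a₂ a₃ := by
    simp only [HkP3, fromRel_adj, inB_HkP3, ne_eq, Fin.ext_iff]; omega
  have h₄ : (HkP3 k).Adj a₃ y := by
    simp only [HkP3, fromRel_adj, inB_HkP3, ne_eq, Fin.ext_iff]; omega
  obtain ⟨p, hp, hlen⟩ := exists_isPath_of_HkP3_le (G := HkP3 k) le_rfl hx hu
    (.cons h₁ (.cons h₂ (.cons h₃ (.cons h₄ .nil))))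
    (by
      simp only [Walk.cons_isPath_iff, Walk.IsPath.nil, Walk.support_cons, Walk.support_nil,
        List.mem_cons, List.not_mem_nil, Fin.ext_iff, or_false, true_and]
      omega)
    {u, y} (by simp [inB_HkP3]; omega) (by simp [Fin.ext_iff]; omega)
    (by
      simp only [Walk.support_cons, Walk.support_nil, List.mem_cons, List.not_mem_nil,
        Finset.mem_insert, Finset.mem_singleton, Fin.ext_iff, or_false]
      omega)
  refine ⟨p, hp, ?_⟩
  rw [Finset.card_pair (by simpa [Fin.ext_iff])] at hlen
  simp only [Walk.support_cons, Walk.support_nil, List.length_cons, List.length_nil] at hlen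
  omega

/-- If `H_k(P_3) ≤ G` and `q` is a path in `G` from `a_1` to `a_2` inside `A`, then every `b ∈ B`
is joined to `a_2` by a path with `2k-3` more vertices than `q`. -/
theorem exists_isPath_to_a₂ {k : ℕ} (hk : 3 ≤ k) {G : SimpleGraph (Fin (2 * k + 1))}
    (hG : HkP3 k ≤ G) {b a₁ a₂ : Fin (2 * k + 1)} (hb : inB_HkP3 k b) (ha₁ : (a₁ : ℕ) = 0)
    (q : G.Walk a₁ a₂) (hq : q.IsPath) (hqA : ∀ v ∈ q.support, (v : ℕ) < 3) :
    ∃ p : G.Walk b a₂, p.IsPath ∧ p.support.length = q.support.length + (2 * k - 3) := by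
  obtain ⟨u, hu, hub⟩ : ∃ u : Fin (2 * k + 1), inB_HkP3 k u ∧ u ≠ b := by
    by_cases h : (b : ℕ) = 3
    · exact ⟨⟨4, by omega⟩, ⟨by simp, by simp only; omega⟩, by simp [Fin.ext_iff, h]⟩
    · exact ⟨⟨3, by omega⟩, ⟨by simp, by simp only; omega⟩, by simp only [ne_eq, Fin.ext_iff]; omega⟩
  have hadj : G.Adj u a₁ := by
    refine hG ?_
    simp only [HkP3, fromRel_adj, inB_HkP3, ne_eq, Fin.ext_iff] at hu ⊢
    omega
  obtain ⟨p, hp, hlen⟩ := exists_isPath_of_HkP3_le hG hb hu (.cons hadj q)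
    ((Walk.cons_isPath_iff _ _).2 ⟨hq, fun h => by have := hqA u h; have := hu.1; omega⟩) {u}
    (by simpa using hu) (by simpa using hub.symm)
    (by
      intro v hv
      rw [Walk.support_cons, List.mem_cons] at hv
      exact hv.imp (by simp) (hqA v))
  refine ⟨p, hp, ?_⟩
  rw [Walk.support_cons, List.length_cons, Finset.card_singleton] at hlen
  omega

/-- `H_k(P_3)` has a path on `2k-1` vertices from any `b ∈ B` to `a_2`. -/
theorem HkP3_exists_isPath_to_a₂ {k : ℕ} (hk : 3 ≤ k) {b a₂ : Fin (2 * k + 1)}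
    (hb : inB_HkP3 k b) (ha₂ : (a₂ : ℕ) = 1) :
    ∃ p : (HkP3 k).Walk b a₂, p.IsPath ∧ p.support.length = 2 * k - 1 := by
  obtain ⟨a₁, ha₁⟩ : ∃ a : Fin (2 * k + 1), (a : ℕ) = 0 := ⟨⟨0, by omega⟩, rfl⟩
  have h : (HkP3 k).Adj a₁ a₂ := by
    simp only [HkP3, fromRel_adj, inB_HkP3, ne_eq, Fin.ext_iff]; omega
  obtain ⟨p, hp, hlen⟩ := exists_isPath_to_a₂ (G := HkP3 k) hk le_rfl hb ha₁ (.cons h .nil)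
    (by simp [Walk.cons_isPath_iff, h.ne]) (by simp [ha₁, ha₂])
  refine ⟨p, hp, ?_⟩
  simp only [Walk.support_cons, Walk.support_nil, List.length_cons, List.length_nil] at hlen
  omega

/-- `H_k(P_3) + a_1a_3` has a path on `2k` vertices from any `b ∈ B` to `a_2`. -/
theorem addEdge_HkP3_exists_isPath_to_a₂ {k : ℕ} (hk : 3 ≤ k) {b a₁ a₂ a₃ : Fin (2 * k + 1)}
    (hb : inB_HkP3 k b) (ha₁ : (a₁ : ℕ) = 0) (ha₂ : (a₂ : ℕ) = 1) (ha₃ : (a₃ : ℕ) = 2) :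
    ∃ p : (addEdge (HkP3 k) a₁ a₃).Walk b a₂, p.IsPath ∧ p.support.length = 2 * k := by
  have h₁₃ : a₁ ≠ a₃ := by rw [ne_eq, Fin.ext_iff]; omega
  have h₁₂ : a₁ ≠ a₂ := by rw [ne_eq, Fin.ext_iff]; omega
  have h₁ : (addEdge (HkP3 k) a₁ a₃).Adj a₁ a₃ := by simp [addEdge, h₁₃]
  have h₂ : (addEdge (HkP3 k) a₁ a₃).Adj a₃ a₂ := by
    refine Or.inl ?_
    simp only [HkP3, fromRel_adj, inB_HkP3, ne_eq, Fin.ext_iff]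
    omega
  obtain ⟨p, hp, hlen⟩ := exists_isPath_to_a₂ (G := addEdge (HkP3 k) a₁ a₃) hk le_sup_left hb ha₁
    (.cons h₁ (.cons h₂ .nil)) (by simp [Walk.cons_isPath_iff, h₁₃, h₁₂, h₂.ne])
    (by simp [ha₁, ha₂, ha₃])
  refine ⟨p, hp, ?_⟩
  simp only [Walk.support_cons, Walk.support_nil, List.length_cons, List.length_nil] at hlen
  omega

/-- Let `k ≥ 5`. For any two distinct vertices `x, y ∈ B ∪ {a_2}` of
`H_k(P_3)` (here `a_1 = 0`, `a_2 = 1`, `a_3 = 2`) there is a path on `2k-1` vertices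
from `x` to `y`. Moreover in `H_k(P_3) + a_1a_3`, for every `b ∈ B` there is a path on
`2k` vertices from `b` to `a_2`. -/
theorem HkP3_paths_B_a2 (k : ℕ) (hk : 5 ≤ k) :
    (∀ x y : Fin (2 * k + 1), x ≠ y →
      (inB_HkP3 k (x : ℕ) ∨ (x : ℕ) = 1) → (inB_HkP3 k (y : ℕ) ∨ (y : ℕ) = 1) →
      ∃ p : (HkP3 k).Walk x y, p.IsPath ∧ p.support.length = 2 * k - 1) ∧
    (∀ b : Fin (2 * k + 1), inB_HkP3 k (b : ℕ) →
      ∃ p : (addEdge (HkP3 k) (0 : Fin (2 * k + 1)) (2 : Fin (2 * k + 1))).Walk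
          b (1 : Fin (2 * k + 1)),
        p.IsPath ∧ p.support.length = 2 * k) := by
  refine ⟨fun x y hxy hx hy => ?_, fun b hb => ?_⟩
  · rcases hx with hx | hx <;> rcases hy with hy | hy
    · exact HkP3_exists_isPath_of_inB (by omega) hxy hx hy
    · exact HkP3_exists_isPath_to_a₂ (by omega) hx hy
    · obtain ⟨p, hp, hlen⟩ := HkP3_exists_isPath_to_a₂ (by omega) hy hx
      exact ⟨p.reverse, hp.reverse, by simpa using hlen⟩
    · exact absurd (Fin.ext (hx.trans hy.symm)) hxy
  · exact addEdge_HkP3_exists_isPath_to_a₂ (by omega) hb rfl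
      (Nat.mod_eq_of_lt (by omega : 1 < 2 * k + 1)) (Nat.mod_eq_of_lt (by omega : 2 < 2 * k + 1))
end

section
/- Let k1 ≥ k2 ≥ 2 and let m, n be integers with 2k1 + 2k2 + 2 ≤ m ≤ n. Then h(m, 2k1 + 2k2, k1 + k2 − 1) + ex(n − m, P_{2k2+1}) ≤ h(n, 2k1 + 2k2, k1 + k2 − 1). -/
open SimpleGraph

/-- If the non-isolated vertices of `G` lie in `S` and every vertex of `S` has degree at least `d`,
then paths on at most `d + 1` vertices can be built greedily. -/
theorem exists_path_list_of_le_degree {V : Type*} [Fintype V] [DecidableEq V]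
    (G : SimpleGraph V) [DecidableRel G.Adj] (S : Finset V) (hS : S.Nonempty)
    (hsupp : ∀ a b, G.Adj a b → a ∈ S) (d : ℕ) (hdeg : ∀ v ∈ S, d ≤ G.degree v)
    (j : ℕ) (hj : j ≤ d) :
    ∃ v ∈ S, ∃ l : List V, (v :: l).Nodup ∧ (v :: l).IsChain G.Adj ∧ l.length = j := by
  induction j with
  | zero =>
    obtain ⟨v, hv⟩ := hS
    exact ⟨v, hv, [], by simp, by simp, rfl⟩
  | succ j ih =>
    obtain ⟨v, hv, l, hnd, hch, hlen⟩ := ih (by omega)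
    have hlt : l.toFinset.card < (G.neighborFinset v).card := by
      have h₁ := l.toFinset_card_le
      have h₂ := hdeg v hv
      rw [G.card_neighborFinset_eq_degree]
      omega
    obtain ⟨w, hw, hwl⟩ := Finset.exists_mem_notMem_of_card_lt_card hlt
    rw [mem_neighborFinset] at hw
    rw [List.mem_toFinset] at hwl
    refine ⟨w, hsupp _ _ hw.symm, v :: l, ?_, ?_, by simp [hlen]⟩
    · rw [List.nodup_cons]
      exact ⟨by simp [hwl, hw.ne'], hnd⟩
    · exact List.isChain_cons_cons.2 ⟨hw.symm, hch⟩

theorem containsCopy_pathGraph_of_list {V : Type*} (G : SimpleGraph V) (l : List V)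
    (hnd : l.Nodup) (hch : l.IsChain G.Adj) : ContainsCopy G (pathGraph l.length) := by
  refine ⟨l.get, List.nodup_iff_injective_get.1 hnd, fun a b hab => ?_⟩
  have step : ∀ a b : Fin l.length, (a : ℕ) + 1 = b → G.Adj (l.get a) (l.get b) := by
    rintro ⟨a, ha⟩ ⟨b, hb⟩ rfl
    exact List.isChain_iff_getElem.1 hch a hb
  rcases pathGraph_adj.1 hab with h | h
  · exact step a b h
  · exact (step b a h).symm

theorem card_edgeFinset_le_of_not_containsCopy_pathGraph {V : Type*} [Fintype V] [DecidableEq V]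
    (d : ℕ) (S : Finset V) (G : SimpleGraph V) [DecidableRel G.Adj]
    (hsupp : ∀ a b, G.Adj a b → a ∈ S) (hfree : ¬ ContainsCopy G (pathGraph (d + 2))) :
    G.edgeFinset.card ≤ d * S.card := by
  classical
  induction hn : S.card generalizing S G with
  | zero =>
    rw [Finset.card_eq_zero] at hn
    subst hn
    have : G = ⊥ := by
      ext a b
      simpa using fun h => by simpa using hsupp a b h
    subst this
    simp
  | succ n ih =>
    by_cases hdeg : ∀ v ∈ S, d + 1 ≤ G.degree v
    · obtain ⟨v, -, l, hnd, hch, hlen⟩ := exists_path_list_of_le_degree G S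
        (Finset.card_pos.1 (by omega)) hsupp (d + 1) hdeg (d + 1) le_rfl
      refine absurd ?_ hfree
      have := containsCopy_pathGraph_of_list G (v :: l) hnd hch
      rwa [List.length_cons, hlen] at this
    · push Not at hdeg
      obtain ⟨v, hv, hlt⟩ := hdeg
      have key := ih (S.erase v) (G.deleteIncidenceSet v)
        (fun a b hab => by
          rw [deleteIncidenceSet_adj] at hab
          exact Finset.mem_erase.2 ⟨hab.2.1, hsupp a b hab.1⟩)
        (fun ⟨f, hf, hadj⟩ => hfree
          ⟨f, hf, fun a b hab => G.deleteIncidenceSet_le v (hadj a b hab)⟩)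
        (by rw [Finset.card_erase_of_mem hv, hn, Nat.add_sub_cancel])
      rw [card_edgeFinset_deleteIncidenceSet] at key
      rw [Nat.mul_succ]
      omega

theorem exNum_pathGraph_le (n d : ℕ) : exNum n (pathGraph (d + 2)) ≤ d * n := by
  classical
  refine csSup_le' ?_
  rintro _ ⟨G, hfree, rfl⟩
  rw [edgeCount, ← coe_edgeFinset, Set.ncard_coe_finset]
  simpa using card_edgeFinset_le_of_not_containsCopy_pathGraph d Finset.univ G (by simp) hfree

/-- Let `k1 ≥ k2 ≥ 2` and `2k1 + 2k2 + 2 ≤ m ≤ n`. Then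
`h(m, 2k1+2k2, k1+k2-1) + ex(n-m, P_{2k2+1}) ≤ h(n, 2k1+2k2, k1+k2-1)`. -/
theorem hFun_exNum_le_hFun (k1 k2 m n : ℕ) (hk2 : 2 ≤ k2) (hk12 : k2 ≤ k1)
    (hm : 2 * k1 + 2 * k2 + 2 ≤ m) (hmn : m ≤ n) :
    hFun m (2 * k1 + 2 * k2) (k1 + k2 - 1) + exNum (n - m) (pathGraph (2 * k2 + 1)) ≤
      hFun n (2 * k1 + 2 * k2) (k1 + k2 - 1) := by
  have hex : exNum (n - m) (pathGraph (2 * k2 + 1)) ≤ (k1 + k2 - 1) * (n - m) := by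
    have h := exNum_pathGraph_le (n - m) (2 * k2 - 1)
    rw [show 2 * k2 - 1 + 2 = 2 * k2 + 1 by omega] at h
    exact h.trans (Nat.mul_le_mul_right _ (by omega))
  unfold hFun
  rw [show n - (2 * k1 + 2 * k2) + (k1 + k2 - 1) =
    m - (2 * k1 + 2 * k2) + (k1 + k2 - 1) + (n - m) by omega, Nat.mul_add _ _ (n - m)]
  omega
end
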